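/- arXiv:2505.05173 — 2 statements merged into one kernel-verified Lean document; each statement's English description precedes it below -/
import Mathlib

section
/- (Brauer's trick, Lemma 2.1) Let G be a finite group, let ρ be a finite-dimensional complex representation of G that is irreducible and nonprincipal (i.e., not isomorphic to the trivial representation), and let A and B be subgroups of G. If finrank(Inv_A(ρ)) + finrank(Inv_B(ρ)) > finrank(Inv_{A ⊓ B}(ρ)), then the subgroup generated by A and B is a proper subgroup of G (i.e., A ⊔ B ≠ ⊤). -/
/-!
The spaces of `A`- and `B`-invariants both lie in the space of `A ⊓ B`-invariants, so by the
dimension formula the strict inequality forces them to meet in a nonzero subspace. If `A` and `B`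
generated `G`, every vector of that intersection would be fixed by `G`; the intersection would
then be a nonzero subrepresentation with trivial action, hence all of `V` by irreducibility,
contradicting that `ρ` is nonprincipal.
-/

/-- **Brauer's trick.** If `ρ` is a nonprincipal irreducible complex representation of a
finite group `G` and `A`, `B` are subgroups with
`dim Inv_A(ρ) + dim Inv_B(ρ) > dim Inv_{A ⊓ B}(ρ)`, then `⟨A, B⟩` is a proper subgroup. -/
theorem brauer_trick {G V : Type*} [Group G] [Fintype G]
    [AddCommGroup V] [Module ℂ V] [FiniteDimensional ℂ V]
    (ρ : Representation ℂ G V)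
    (hV : Nontrivial V)
    (hirr : ∀ W : Submodule ℂ V, (∀ g : G, ∀ v ∈ W, ρ g v ∈ W) → W = ⊥ ∨ W = ⊤)
    (hnonprincipal : ¬ ∀ g : G, ∀ v : V, ρ g v = v)
    (A B : Subgroup G)
    (h : Module.finrank ℂ (Representation.invariants (ρ.comp A.subtype))
          + Module.finrank ℂ (Representation.invariants (ρ.comp B.subtype))
        > Module.finrank ℂ (Representation.invariants (ρ.comp (A ⊓ B).subtype))) :
    A ⊔ B ≠ ⊤ := by
  intro htop
  have memA : ∀ v, v ∈ Representation.invariants (ρ.comp A.subtype) ↔ ∀ g ∈ A, ρ g v = v :=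
    fun v => ⟨fun hv g hg => hv ⟨g, hg⟩, fun hv g => hv g g.2⟩
  have memB : ∀ v, v ∈ Representation.invariants (ρ.comp B.subtype) ↔ ∀ g ∈ B, ρ g v = v :=
    fun v => ⟨fun hv g hg => hv ⟨g, hg⟩, fun hv g => hv g g.2⟩
  have hle : Representation.invariants (ρ.comp A.subtype) ⊔
      Representation.invariants (ρ.comp B.subtype) ≤
      Representation.invariants (ρ.comp (A ⊓ B).subtype) :=
    sup_le (fun v hv g => (memA v).1 hv g g.2.1) (fun v hv g => (memB v).1 hv g g.2.2)
  -- The elements of `G` fixing a given vector form a subgroup, so `A` and `B` suffice.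
  have hfix : ∀ v ∈ Representation.invariants (ρ.comp A.subtype) ⊓
      Representation.invariants (ρ.comp B.subtype), ∀ g : G, ρ g v = v := by
    rintro v ⟨hvA, hvB⟩ g
    have hg : g ∈ A ⊔ B := htop ▸ Subgroup.mem_top g
    rw [Subgroup.sup_eq_closure] at hg
    induction hg using Subgroup.closure_induction with
    | mem x hx => exact hx.elim ((memA v).1 hvA x) ((memB v).1 hvB x)
    | one => simp
    | mul x y _ _ hx hy => rw [map_mul, Module.End.mul_apply, hy, hx]
    | inv x _ hx =>
      calc ρ x⁻¹ v = ρ x⁻¹ (ρ x v) := by rw [hx]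
        _ = v := ρ.inv_self_apply x v
  have hdim := Submodule.finrank_sup_add_finrank_inf_eq
    (Representation.invariants (ρ.comp A.subtype)) (Representation.invariants (ρ.comp B.subtype))
  have hmono := Submodule.finrank_mono hle
  rcases hirr (Representation.invariants (ρ.comp A.subtype) ⊓
      Representation.invariants (ρ.comp B.subtype))
      (fun g v hv => by rw [hfix v hv g]; exact hv) with h0 | h1
  · rw [h0, finrank_bot] at hdim
    omega
  · exact hnonprincipal fun g v => hfix v (h1 ▸ Submodule.mem_top) g
end

section
/- Let G be a finite group that is not solvable and is generated by three involutions x₁, x₂, x₃ (each of order 2), and let ρ be a finite-dimensional complex representation of G that is irreducible and nonprincipal. Then finrank(Inv_{⟨x₁,x₂⟩}(ρ)) + finrank(Inv_{⟨x₃⟩}(ρ)) ≤ finrank(V). (This is the contrapositive form of Brauer's trick used in the proof for the group HS, where A = ⟨x₁,x₂⟩ and B = ⟨x₃⟩ satisfy A ∩ B = 1.) -/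
/-!
The two spaces of invariants intersect in zero, so their dimensions add up to at most `dim V`.
Indeed, a vector fixed by both `⟨x₁, x₂⟩` and `⟨x₃⟩` is fixed by `G = ⟨x₁, x₂, x₃⟩`, and the
`G`-invariants form a subrepresentation, which irreducibility forces to be `0` or all of `V`;
the latter is excluded because `ρ` is nonprincipal.
-/

/-- If a finite nonsolvable group `G` is generated by three involutions `x₁, x₂, x₃` and `ρ`
is a nonprincipal irreducible complex representation of `G`, then
`dim Inv_{⟨x₁,x₂⟩}(ρ) + dim Inv_{⟨x₃⟩}(ρ) ≤ dim V`. -/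
theorem invariants_dim_le_of_three_involutions {G V : Type*} [Group G] [Fintype G]
    [AddCommGroup V] [Module ℂ V] [FiniteDimensional ℂ V]
    (hsolv : ¬ IsSolvable G)
    (x₁ x₂ x₃ : G)
    (h₁ : orderOf x₁ = 2) (h₂ : orderOf x₂ = 2) (h₃ : orderOf x₃ = 2)
    (hgen : Subgroup.closure {x₁, x₂, x₃} = ⊤)
    (ρ : Representation ℂ G V)
    (hV : Nontrivial V)
    (hirr : ∀ W : Submodule ℂ V, (∀ g : G, ∀ v ∈ W, ρ g v ∈ W) → W = ⊥ ∨ W = ⊤)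
    (hnonprincipal : ¬ ∀ g : G, ∀ v : V, ρ g v = v) :
    Module.finrank ℂ (Representation.invariants (ρ.comp (Subgroup.closure {x₁, x₂}).subtype))
      + Module.finrank ℂ (Representation.invariants (ρ.comp (Subgroup.closure {x₃}).subtype))
    ≤ Module.finrank ℂ V := by
  apply Submodule.finrank_add_finrank_le_of_disjoint
  rw [Submodule.disjoint_def]
  intro v hvA hvB
  rw [Representation.mem_invariants] at hvA hvB
  -- A vector fixed by both subgroups is fixed by the generators, hence by all of `G`.
  have hv : ∀ g : G, ρ g v = v := by
    intro g
    have hg : g ∈ Subgroup.closure {x₁, x₂, x₃} := hgen ▸ Subgroup.mem_top g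
    induction hg using Subgroup.closure_induction with
    | mem x hx =>
      rcases hx with rfl | rfl | rfl
      · exact hvA ⟨x, Subgroup.subset_closure (by simp)⟩
      · exact hvA ⟨x, Subgroup.subset_closure (by simp)⟩
      · exact hvB ⟨x, Subgroup.subset_closure (by simp)⟩
    | one => simp
    | mul x y _ _ hx hy => rw [map_mul, Module.End.mul_apply, hy, hx]
    | inv x _ hx =>
      conv_lhs => rw [← hx]
      rw [← Module.End.mul_apply, ← map_mul]
      simp
  rcases hirr ρ.invariants (fun g w hw => by
      rw [Representation.mem_invariants] at hw
      rwa [hw g, Representation.mem_invariants]) with h | h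
  · have hmem : v ∈ ρ.invariants := (Representation.mem_invariants ρ v).2 hv
    rwa [h, Submodule.mem_bot] at hmem
  · refine absurd (fun g w => ?_) hnonprincipal
    have hw : w ∈ ρ.invariants := h ▸ Submodule.mem_top
    exact (Representation.mem_invariants ρ w).1 hw g
end
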